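/- In the root system of type D_ℓ with ℓ even, (ω_ℓ, ω_ℓ, 0) and (ω_{ℓ−1}, ω_{ℓ−1}, 0) and (ω₁, ω₁, 0) are low triples, while (ω_{ℓ−1}, ω_ℓ, ν) is never a low triple for any dominant ν; with ℓ odd, (ω_{ℓ−1}, ω_ℓ, 0) and (ω₁, ω₁, 0) are low triples while (ω_ℓ, ω_ℓ, ν) is never a low triple. This matches duality: −w₀ω_ℓ = ω_ℓ for ℓ even and −w₀ω_ℓ = ω_{ℓ−1} for ℓ odd. -/

import Mathlib

open scoped RealInnerProductSpace

noncomputable section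

variable {E : Type*} [NormedAddCommGroup E] [InnerProductSpace ℝ E]

/-- The pairing `⟨x, α∨⟩ = 2(x,α)/(α,α)`. -/
def cpair (x α : E) : ℝ := 2 * ⟪x, α⟫ / ⟪α, α⟫

/-- Reflection in the hyperplane orthogonal to `α`. -/
def wrefl (α x : E) : E := x - cpair x α • α

/-- An irreducible reduced root system with a chosen base `simple : Fin ℓ → E`. -/
structure RootSystemData (ℓ : ℕ) (E : Type*) [NormedAddCommGroup E]
    [InnerProductSpace ℝ E] where
  roots : Finset E
  simple : Fin ℓ → E
  simple_mem : ∀ i, simple i ∈ roots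
  root_ne_zero : ∀ α ∈ roots, α ≠ 0
  reduced : ∀ α ∈ roots, (2 : ℝ) • α ∉ roots
  cpair_int : ∀ α ∈ roots, ∀ β ∈ roots, ∃ n : ℤ, cpair β α = (n : ℝ)
  reflect_mem : ∀ α ∈ roots, ∀ β ∈ roots, wrefl α β ∈ roots
  simple_indep : LinearIndependent ℝ simple
  root_decomp : ∀ α ∈ roots,
    (∃ c : Fin ℓ → ℕ, α = ∑ i, (c i : ℝ) • simple i) ∨
    (∃ c : Fin ℓ → ℕ, α = -∑ i, (c i : ℝ) • simple i)
  irred : ∀ S : Finset (Fin ℓ), S.Nonempty →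
    (∀ i ∈ S, ∀ j ∉ S, ⟪simple i, simple j⟫ = 0) → S = Finset.univ

namespace RootSystemData

variable {ℓ : ℕ} (R : RootSystemData ℓ E)

/-- Integral weights. -/
def IsIntegral (x : E) : Prop := ∀ α ∈ R.roots, ∃ n : ℤ, cpair x α = (n : ℝ)

/-- Dominant (integral) weights. -/
def IsDominant (x : E) : Prop :=
  R.IsIntegral x ∧ ∀ i, 0 ≤ cpair x (R.simple i)

/-- The dominant order: `R.wle μ λ` means `μ ≤ λ`, i.e. `λ - μ` is a nonnegative
integer combination of the simple roots. -/
def wle (μ lam : E) : Prop :=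
  ∃ c : Fin ℓ → ℕ, lam - μ = ∑ i, (c i : ℝ) • R.simple i

/-- Minuscule weights: nonzero dominant weights all of whose pairings with roots
lie in `{0, 1, -1}`. -/
def IsMinuscule (x : E) : Prop :=
  R.IsDominant x ∧ x ≠ 0 ∧
  ∀ α ∈ R.roots, cpair x α = 0 ∨ cpair x α = 1 ∨ cpair x α = -1

/-- `y` lies in the Weyl group orbit of `x`. -/
def InWeylOrbit (x y : E) : Prop :=
  ∃ l : List E, (∀ α ∈ l, α ∈ R.roots) ∧ y = l.foldr wrefl x

/-- `R.IsDualOf μ λ` expresses `μ = -w₀ λ`: `μ` is the dominant element of the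
Weyl orbit of `-λ`. -/
def IsDualOf (μ lam : E) : Prop := R.IsDominant μ ∧ R.InWeylOrbit (-lam) μ

/-- Low triples of dominant weights. -/
def LowTriple (lam mu nu : E) : Prop :=
  R.IsDominant lam ∧ R.IsDominant mu ∧ R.IsDominant nu ∧
  (∀ lam' mu' : E, R.IsDominant lam' → R.IsDominant mu' →
    R.wle lam' lam → R.wle mu' mu → R.wle nu (lam' + mu') → lam' = lam ∧ mu' = mu) ∧
  R.wle (nu + ∑ i, R.simple i) (lam + mu)

/-- Covering relation in the poset of dominant weights. -/
def Covers (lam mu : E) : Prop :=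
  R.IsDominant lam ∧ R.IsDominant mu ∧ R.wle mu lam ∧ mu ≠ lam ∧
  ∀ η, R.IsDominant η → R.wle mu η → R.wle η lam → η = mu ∨ η = lam

/-- A root of the subsystem `Φ_I` generated by the simple roots indexed by `I`. -/
def IsRootOf (I : Finset (Fin ℓ)) (β : E) : Prop :=
  β ∈ R.roots ∧ ∃ c : Fin ℓ → ℤ, (∀ i, c i ≠ 0 → i ∈ I) ∧
    β = ∑ i, (c i : ℝ) • R.simple i

/-- A short root of `Φ_I`. -/
def IsShortRootOf (I : Finset (Fin ℓ)) (β : E) : Prop :=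
  R.IsRootOf I β ∧ ∀ γ, R.IsRootOf I γ → ⟪β, β⟫ ≤ ⟪γ, γ⟫

/-- `θ` is the highest short root of `Φ_I`. -/
def IsHighestShortRoot (I : Finset (Fin ℓ)) (θ : E) : Prop :=
  R.IsShortRootOf I θ ∧ ∀ γ, R.IsShortRootOf I γ → R.wle γ θ

/-- `I` indexes a connected (i.e. irreducible) subdiagram of the Dynkin diagram. -/
def Connected (I : Finset (Fin ℓ)) : Prop :=
  I.Nonempty ∧ ∀ S ⊆ I, S.Nonempty →
    (∀ i ∈ S, ∀ j ∈ I, j ∉ S → ⟪R.simple i, R.simple j⟫ = 0) → S = I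

/-- `I` is of type A: the Cartan matrix of `Φ_I` is that of a type `A` chain. -/
def IsTypeASub (I : Finset (Fin ℓ)) : Prop :=
  ∃ e : Fin I.card ≃ {i // i ∈ I}, ∀ a b : Fin I.card,
    cpair (R.simple (e b).1) (R.simple (e a).1) =
      if a = b then 2
      else if (a : ℕ) + 1 = (b : ℕ) ∨ (b : ℕ) + 1 = (a : ℕ) then -1 else 0

/-- The subdiagram indexed by `I` is simply laced. -/
def SimplyLaced (I : Finset (Fin ℓ)) : Prop :=
  ∀ i ∈ I, ∀ j ∈ I, i ≠ j →
    cpair (R.simple i) (R.simple j) = 0 ∨ cpair (R.simple i) (R.simple j) = -1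

end RootSystemData

variable {ℓ : ℕ}

/-- `R` is of type D_ℓ (Bourbaki numbering): Cartan entries `⟨α_j, α_i∨⟩`. -/
def RootSystemData.IsTypeD (R : RootSystemData ℓ E) : Prop :=
  ∀ i j : Fin ℓ, cpair (R.simple j) (R.simple i) =
    if i = j then 2
    else if ((i : ℕ) + 1 = (j : ℕ) ∧ (j : ℕ) ≤ ℓ - 2) ∨
            ((j : ℕ) + 1 = (i : ℕ) ∧ (i : ℕ) ≤ ℓ - 2) ∨
            ((i : ℕ) = ℓ - 3 ∧ (j : ℕ) = ℓ - 1) ∨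
            ((j : ℕ) = ℓ - 3 ∧ (i : ℕ) = ℓ - 1) then -1 else 0

lemma cpair_mul_inner_self {α : E} (hα : α ≠ 0) (x : E) :
    cpair x α * ⟪α, α⟫ = 2 * ⟪x, α⟫ := by
  have : ⟪α, α⟫ ≠ 0 := by simpa using hα
  unfold cpair
  field_simp

lemma inner_wrefl_self {α : E} (hα : α ≠ 0) (x : E) :
    ⟪wrefl α x, wrefl α x⟫ = ⟪x, x⟫ := by
  have h := cpair_mul_inner_self hα x
  simp only [wrefl, inner_sub_left, inner_sub_right, inner_smul_left, inner_smul_right,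
    real_inner_comm x α, conj_trivial]
  linear_combination (cpair x α) * h

namespace RootSystemData

section General

variable {ℓ : ℕ} (R : RootSystemData ℓ E)

lemma simple_ne_zero (i : Fin ℓ) : R.simple i ≠ 0 :=
  R.root_ne_zero _ (R.simple_mem i)

lemma coeff_injective {c d : Fin ℓ → ℝ}
    (h : ∑ i, c i • R.simple i = ∑ i, d i • R.simple i) : c = d :=
  funext fun i ↦ (Fintype.linearIndependent_iffₛ.1 R.simple_indep) c d h i

/-- A positive root proportional to a simple root is that simple root. -/
lemma natCast_smul_simple_mem {n : ℕ} {i : Fin ℓ}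
    (h : (n : ℝ) • R.simple i ∈ R.roots) : n = 1 := by
  have hs : ⟪R.simple i, R.simple i⟫ ≠ 0 := by simpa using R.simple_ne_zero i
  have hn : n ≠ 0 := by
    rintro rfl
    exact R.root_ne_zero _ h (by simp)
  obtain ⟨z, hz⟩ := R.cpair_int _ h _ (R.simple_mem i)
  have hnz : (n : ℝ) ≠ 0 := by exact_mod_cast hn
  have h1 : (n : ℤ) * z = 2 := by
    have : (n : ℝ) * z = 2 := by
      rw [← hz]
      simp only [cpair, inner_smul_left, inner_smul_right, conj_trivial]
      field_simp
    exact_mod_cast this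
  have h2 : n ∣ 2 := by
    have : (n : ℤ) ∣ 2 := ⟨z, h1.symm⟩
    exact_mod_cast this
  rcases (Nat.dvd_prime Nat.prime_two).1 h2 with h3 | h3
  · exact h3
  · subst h3
    exact absurd (by exact_mod_cast h) (R.reduced _ (R.simple_mem i))

lemma inner_self_eq_simple_of_pos (n : ℕ) : ∀ c : Fin ℓ → ℕ, ∑ i, c i = n →
    ∑ i, (c i : ℝ) • R.simple i ∈ R.roots →
    ∃ i, ⟪∑ i, (c i : ℝ) • R.simple i, ∑ i, (c i : ℝ) • R.simple i⟫ =
      ⟪R.simple i, R.simple i⟫ := by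
  induction n using Nat.strong_induction_on with
  | _ n ih =>
  intro c hc hroot
  set α := ∑ i, (c i : ℝ) • R.simple i with hα
  have hpos : 0 < ⟪α, α⟫ := real_inner_self_pos.2 (R.root_ne_zero _ hroot)
  have hex : ∃ i, 0 < (c i : ℝ) * ⟪R.simple i, α⟫ := by
    by_contra! hcon
    have : ⟪α, α⟫ ≤ 0 := by
      nth_rewrite 1 [hα]
      rw [sum_inner]
      exact Finset.sum_nonpos fun i _ ↦ by simpa [inner_smul_left] using hcon i
    linarith
  obtain ⟨i, hi⟩ := hex
  have hiα : 0 < ⟪R.simple i, α⟫ := pos_of_mul_pos_right hi (Nat.cast_nonneg _)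
  by_cases hone : ∀ j, j ≠ i → c j = 0
  · have hα' : α = (c i : ℝ) • R.simple i := by
      rw [hα]
      exact Finset.sum_eq_single i (fun j _ hj ↦ by simp [hone j hj]) (by simp)
    have := R.natCast_smul_simple_mem (hα' ▸ hroot)
    exact ⟨i, by rw [hα', this]; simp⟩
  push Not at hone
  obtain ⟨j, hji, hj⟩ := hone
  obtain ⟨k, hk⟩ := R.cpair_int _ (R.simple_mem i) _ hroot
  have hkpos : 0 < k := by
    have h1 := cpair_mul_inner_self (R.simple_ne_zero i) α
    have h2 : 0 < ⟪R.simple i, R.simple i⟫ := real_inner_self_pos.2 (R.simple_ne_zero i)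
    rw [hk, real_inner_comm (R.simple i) α] at h1
    have : (0 : ℝ) < k := pos_of_mul_pos_left (by rw [h1]; linarith) h2.le
    exact_mod_cast this
  have hβ := R.reflect_mem _ (R.simple_mem i) _ hroot
  have hβe : wrefl (R.simple i) α =
      ∑ t, ((c t : ℝ) - if t = i then (k : ℝ) else 0) • R.simple t := by
    rw [wrefl, hk]
    simp [sub_smul, Finset.sum_sub_distrib, hα]
  have hnorm := inner_wrefl_self (R.simple_ne_zero i) α
  rcases R.root_decomp _ hβ with ⟨d, hd⟩ | ⟨d, hd⟩
  · have hcd := R.coeff_injective (hβe.symm.trans hd)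
    have hcd' : ∀ t, (c t : ℤ) - (if t = i then k else 0) = d t := fun t ↦ by
      have := congrFun hcd t
      split_ifs at this ⊢ <;> exact_mod_cast this
    have hlt : ∑ t, d t < n := by
      rw [← hc]
      refine Finset.sum_lt_sum (fun t _ ↦ ?_) ⟨i, Finset.mem_univ _, ?_⟩
      · have := hcd' t
        split_ifs at this <;> omega
      · have := hcd' i
        simp only [if_true] at this
        omega
    obtain ⟨t, ht⟩ := ih _ hlt d rfl (hd ▸ hβ)
    exact ⟨t, by rw [← hnorm, hd, ht]⟩
  · have hd' : ∑ t, ((c t : ℝ) - if t = i then (k : ℝ) else 0) • R.simple t =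
        ∑ t, (-(d t : ℝ)) • R.simple t := by
      rw [← hβe, hd]
      simp
    have := congrFun (R.coeff_injective hd') j
    simp only [hji, if_false, sub_zero] at this
    have h1 : (0 : ℝ) < c j := by exact_mod_cast Nat.pos_of_ne_zero hj
    have h2 : (0 : ℝ) ≤ d j := Nat.cast_nonneg _
    linarith

/-- Every root is as long as some simple root. -/
lemma inner_self_eq_simple {α : E} (hα : α ∈ R.roots) :
    ∃ i, ⟪α, α⟫ = ⟪R.simple i, R.simple i⟫ := by
  rcases R.root_decomp α hα with ⟨c, rfl⟩ | ⟨c, hc⟩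
  · exact R.inner_self_eq_simple_of_pos _ c rfl hα
  · have h1 := inner_wrefl_self (R.root_ne_zero α hα) α
    have h2 := R.reflect_mem α hα α hα
    have h3 : wrefl α α = -α := by
      have : ⟪α, α⟫ ≠ 0 := by simpa using R.root_ne_zero α hα
      have h4 : cpair α α = 2 := by
        unfold cpair
        field_simp
      rw [wrefl, h4, two_smul]
      abel
    rw [h3, hc, neg_neg] at h2
    obtain ⟨i, hi⟩ := R.inner_self_eq_simple_of_pos _ c rfl h2
    exact ⟨i, by rw [← hi, hc]; simp⟩

/-- If all simple roots have the same length, integrality is tested on simple roots. -/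
lemma isDominant_of_simple {s : ℝ} (hs : ∀ i, ⟪R.simple i, R.simple i⟫ = s) {x : E}
    {n : Fin ℓ → ℕ} (hx : ∀ i, cpair x (R.simple i) = n i) : R.IsDominant x := by
  refine ⟨fun α hα ↦ ?_, fun i ↦ by rw [hx]; positivity⟩
  obtain ⟨i₀, hi₀⟩ := R.inner_self_eq_simple hα
  have hs0 : s ≠ 0 := by
    rw [← hs i₀]
    simpa using R.simple_ne_zero i₀
  rw [hs] at hi₀
  have key : ∀ c : Fin ℓ → ℕ,
      2 * ⟪x, ∑ i, (c i : ℝ) • R.simple i⟫ = ((∑ i, c i * n i : ℕ) : ℝ) * s := by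
    intro c
    push_cast
    rw [inner_sum, Finset.mul_sum, Finset.sum_mul]
    refine Finset.sum_congr rfl fun i _ ↦ ?_
    have := cpair_mul_inner_self (R.simple_ne_zero i) x
    rw [hx, hs] at this
    rw [inner_smul_right]
    linear_combination -(c i : ℝ) * this
  rcases R.root_decomp α hα with ⟨c, hc⟩ | ⟨c, hc⟩
  · refine ⟨(∑ i, c i * n i : ℕ), ?_⟩
    rw [cpair, hi₀, hc, key]
    field_simp
    norm_cast
  · refine ⟨-(∑ i, c i * n i : ℕ), ?_⟩
    rw [cpair, hi₀, hc, inner_neg_right, mul_neg, key]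
    field_simp
    norm_cast

/-- A dominant weight below `lam` that is at least as long as `lam` equals `lam`. -/
lemma eq_of_wle_of_inner_self_le {lam lam' : E} (hdom : R.IsDominant lam')
    (hle : R.wle lam' lam) (hnorm : ⟪lam, lam⟫ ≤ ⟪lam', lam'⟫) : lam' = lam := by
  obtain ⟨c, hc⟩ := hle
  have h1 : 0 ≤ ⟪lam', lam - lam'⟫ := by
    rw [hc, inner_sum]
    refine Finset.sum_nonneg fun i _ ↦ ?_
    have := cpair_mul_inner_self (R.simple_ne_zero i) lam'
    have h2 : 0 ≤ ⟪R.simple i, R.simple i⟫ := real_inner_self_nonneg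
    have h3 := mul_nonneg (hdom.2 i) h2
    rw [inner_smul_right]
    exact mul_nonneg (Nat.cast_nonneg _) (by linarith)
  have h4 : ⟪lam, lam⟫ = ⟪lam', lam'⟫ + 2 * ⟪lam', lam - lam'⟫ +
      ⟪lam - lam', lam - lam'⟫ := by
    simp only [inner_sub_left, inner_sub_right, real_inner_comm lam' lam]
    ring
  have h5 : ⟪lam - lam', lam - lam'⟫ ≤ 0 := by linarith
  have h6 : lam - lam' = 0 := real_inner_self_nonpos.1 h5
  exact (sub_eq_zero.1 h6).symm

/-- Vectors in the span of the simple roots are determined by their pairings. -/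
lemma eq_of_inner_simple {x y : E} (hx : x ∈ Submodule.span ℝ (Set.range R.simple))
    (hy : y ∈ Submodule.span ℝ (Set.range R.simple))
    (h : ∀ i, ⟪x, R.simple i⟫ = ⟪y, R.simple i⟫) : x = y := by
  have hz : x - y ∈ Submodule.span ℝ (Set.range R.simple) := Submodule.sub_mem _ hx hy
  obtain ⟨c, hc⟩ := (Submodule.mem_span_range_iff_exists_fun ℝ).1 hz
  have : ⟪x - y, x - y⟫ = 0 := by
    nth_rewrite 1 [← hc]
    rw [sum_inner]
    refine Finset.sum_eq_zero fun i _ ↦ ?_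
    rw [inner_smul_left, real_inner_comm, inner_sub_left, h i]
    simp
  exact sub_eq_zero.1 (inner_self_eq_zero.1 this)

end General

section TypeD

variable {m : ℕ} (R : RootSystemData (m + 2) E)

/-- The simple roots indexed by natural numbers (and `0` out of range). -/
def node (i : ℕ) : E := if h : i < m + 2 then R.simple ⟨i, h⟩ else 0

/-- The orthogonal vectors `ε_k` in terms of which the roots of type `D` are `±ε_i ± ε_j`. -/
def eps (k : ℕ) : E :=
  ∑ i ∈ Finset.Ico k (m + 1), R.node i + (2⁻¹ : ℝ) • (R.node (m + 1) - R.node m)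

/-- The sum of all the `ε_k`. -/
def epsSum : E := ∑ k ∈ Finset.range (m + 2), R.eps k

/-- Half of the squared length of a root. -/
def halfSq : ℝ := ⟪R.simple 0, R.simple 0⟫ / 2

lemma node_val (i : Fin (m + 2)) : R.node i = R.simple i := by
  simp [node]

lemma node_mem {i : ℕ} (hi : i ≤ m + 1) : R.node i ∈ R.roots := by
  rw [node, dif_pos (by omega)]
  exact R.simple_mem _

lemma halfSq_pos : 0 < R.halfSq :=
  half_pos (real_inner_self_pos.2 (R.simple_ne_zero 0))

lemma IsTypeD.inner_simple_self {R : RootSystemData (m + 2) E} (hD : R.IsTypeD)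
    (i : Fin (m + 2)) : ⟪R.simple i, R.simple i⟫ = 2 * R.halfSq := by
  classical
  have hS := R.irred
    (Finset.univ.filter fun i ↦ ⟪R.simple i, R.simple i⟫ = ⟪R.simple 0, R.simple 0⟫)
    ⟨0, by simp⟩ fun i hi j hj ↦ by
      simp only [Finset.mem_filter, Finset.mem_univ, true_and] at hi hj
      by_contra hij
      have h1 := cpair_mul_inner_self (R.simple_ne_zero i) (R.simple j)
      have h2 := cpair_mul_inner_self (R.simple_ne_zero j) (R.simple i)
      have hsymm : cpair (R.simple j) (R.simple i) = cpair (R.simple i) (R.simple j) := by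
        rw [hD, hD]
        congr 1
        · exact propext eq_comm
        · congr 1
          apply propext
          tauto
      rw [real_inner_comm (R.simple i) (R.simple j)] at h1
      rw [← h1, hsymm] at h2
      rw [hsymm] at h1
      have hne : cpair (R.simple i) (R.simple j) ≠ 0 := by
        intro h0
        rw [h0] at h1
        exact hij (by linarith)
      exact hj ((mul_left_cancel₀ hne h2).trans hi)
  have : i ∈ Finset.univ := Finset.mem_univ i
  rw [← hS] at this
  rw [(Finset.mem_filter.1 this).2, halfSq]
  ring

lemma IsTypeD.inner_node {R : RootSystemData (m + 2) E} (hD : R.IsTypeD) {i j : ℕ}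
    (hi : i ≤ m + 1) (hj : j ≤ m + 1) :
    ⟪R.node i, R.node j⟫ = R.halfSq * if i = j then 2
      else if (i + 1 = j ∧ j ≤ m) ∨ (j + 1 = i ∧ i ≤ m) ∨ (i + 1 = m ∧ j = m + 1) ∨
        (j + 1 = m ∧ i = m + 1) ∨ (m = 0 ∧ (i = 0 ∨ j = 0)) then -1 else 0 := by
  have h1 := cpair_mul_inner_self (R.simple_ne_zero ⟨j, by omega⟩) (R.simple ⟨i, by omega⟩)
  rw [hD.inner_simple_self, hD] at h1
  rw [node, node, dif_pos (by omega), dif_pos (by omega)]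
  simp only [Fin.mk.injEq] at h1
  have h2 : ∀ x y z : ℝ, x * (2 * y) = 2 * z → z = y * x := fun x y z h ↦ by linarith
  rw [h2 _ _ _ h1]
  congr 1
  split_ifs <;> first | rfl | omega

lemma eps_eq_node_add {k : ℕ} (hk : k ≤ m) : R.eps k = R.node k + R.eps (k + 1) := by
  rw [eps, eps, Finset.sum_eq_sum_Ico_succ_bot (by omega), add_assoc]

lemma eps_last : R.eps (m + 1) = (2⁻¹ : ℝ) • (R.node (m + 1) - R.node m) := by
  simp [eps]

lemma node_eq {k : ℕ} (hk : k ≤ m) : R.node k = R.eps k - R.eps (k + 1) := by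
  rw [R.eps_eq_node_add hk]
  abel

lemma node_last : R.node (m + 1) = R.eps m + R.eps (m + 1) := by
  rw [R.eps_eq_node_add le_rfl, eps_last]
  module

lemma IsTypeD.inner_eps_node {R : RootSystemData (m + 2) E} (hD : R.IsTypeD) (hm : 2 ≤ m)
    {j : ℕ} (hj : j ≤ m + 1) {k : ℕ} (hk : k ≤ m + 1) :
    ⟪R.eps k, R.node j⟫ = R.halfSq *
      if j = m + 1 then if k = m ∨ k = m + 1 then 1 else 0
      else if k = j then 1 else if k = j + 1 then -1 else 0 := by
  induction hk using Nat.decreasingInduction with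
  | self =>
    rw [eps_last, inner_smul_left, inner_sub_left, hD.inner_node le_rfl hj,
      hD.inner_node (by omega) hj, ← mul_sub, mul_left_comm]
    congr 1
    simp only [conj_trivial]
    split_ifs <;> first | omega | (norm_num; done) | grind
  | of_succ k hk ih =>
    rw [R.eps_eq_node_add (by omega), inner_add_left, ih, hD.inner_node (by omega) hj,
      ← mul_add]
    congr 1
    split_ifs <;> first | omega | norm_num

lemma IsTypeD.inner_eps_eps {R : RootSystemData (m + 2) E} (hD : R.IsTypeD) (hm : 2 ≤ m)
    {k : ℕ} (hk : k ≤ m + 1) {j : ℕ} (hj : j ≤ m + 1) :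
    ⟪R.eps k, R.eps j⟫ = R.halfSq * if k = j then 1 else 0 := by
  induction hj using Nat.decreasingInduction with
  | self =>
    rw [eps_last, inner_smul_right, inner_sub_right, hD.inner_eps_node hm le_rfl hk,
      hD.inner_eps_node hm (by omega) hk, ← mul_sub, mul_left_comm]
    congr 1
    split_ifs <;> first | omega | norm_num
  | of_succ j hj ih =>
    rw [R.eps_eq_node_add (k := j) (by omega), inner_add_right, ih,
      hD.inner_eps_node hm (by omega) hk, ← mul_add]
    congr 1
    split_ifs <;> first | omega | norm_num

lemma IsTypeD.inner_epsSum_eps {R : RootSystemData (m + 2) E} (hD : R.IsTypeD) (hm : 2 ≤ m)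
    {k : ℕ} (hk : k ≤ m + 1) : ⟪R.epsSum, R.eps k⟫ = R.halfSq := by
  rw [epsSum, sum_inner, Finset.sum_eq_single k]
  · rw [hD.inner_eps_eps hm hk hk]
    simp
  · intro j hj hjk
    rw [hD.inner_eps_eps hm (by simp at hj; omega) hk, if_neg hjk, mul_zero]
  · simp
    omega

lemma IsTypeD.inner_epsSum_node {R : RootSystemData (m + 2) E} (hD : R.IsTypeD) (hm : 2 ≤ m)
    {j : ℕ} (hj : j ≤ m + 1) :
    ⟪R.epsSum, R.node j⟫ = R.halfSq * if j = m + 1 then 2 else 0 := by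
  split_ifs with h
  · rw [h, node_last, inner_add_right, hD.inner_epsSum_eps hm (by omega),
      hD.inner_epsSum_eps hm le_rfl]
    ring
  · rw [R.node_eq (by omega), inner_sub_right, hD.inner_epsSum_eps hm (by omega),
      hD.inner_epsSum_eps hm (by omega)]
    ring

lemma IsTypeD.inner_epsSum_self {R : RootSystemData (m + 2) E} (hD : R.IsTypeD)
    (hm : 2 ≤ m) : ⟪R.epsSum, R.epsSum⟫ = R.halfSq * (m + 2) := by
  nth_rewrite 2 [epsSum]
  rw [inner_sum, Finset.sum_congr rfl fun k hk ↦
    hD.inner_epsSum_eps hm (Nat.lt_succ_iff.1 (Finset.mem_range.1 hk))]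
  simp
  ring

/-- Bessel's inequality for the vectors `ε_k`. -/
lemma IsTypeD.sum_inner_eps_sq_le {R : RootSystemData (m + 2) E} (hD : R.IsTypeD)
    (hm : 2 ≤ m) (x : E) :
    ∑ k ∈ Finset.range (m + 2), ⟪x, R.eps k⟫ ^ 2 ≤ R.halfSq * ⟪x, x⟫ := by
  have hh := R.halfSq_pos
  set y := ∑ k ∈ Finset.range (m + 2), ⟪x, R.eps k⟫ • R.eps k with hy
  have hxy : ⟪x, y⟫ = ∑ k ∈ Finset.range (m + 2), ⟪x, R.eps k⟫ ^ 2 := by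
    rw [hy, inner_sum]
    exact Finset.sum_congr rfl fun k _ ↦ by rw [inner_smul_right, sq]
  have hyy : ⟪y, y⟫ = R.halfSq * ⟪x, y⟫ := by
    have h1 : ∀ k ∈ Finset.range (m + 2), ⟪y, R.eps k⟫ = R.halfSq * ⟪x, R.eps k⟫ := by
      intro k hk
      have hk' : k ≤ m + 1 := Nat.lt_succ_iff.1 (Finset.mem_range.1 hk)
      rw [hy, sum_inner, Finset.sum_eq_single k]
      · rw [inner_smul_left, hD.inner_eps_eps hm hk' hk']
        simp [mul_comm]
      · intro j hj hjk
        rw [inner_smul_left, hD.inner_eps_eps hm (by simp at hj; omega) hk', if_neg hjk]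
        simp
      · exact fun h ↦ absurd hk h
    rw [hxy, Finset.mul_sum]
    nth_rewrite 2 [hy]
    rw [inner_sum]
    refine Finset.sum_congr rfl fun k hk ↦ ?_
    rw [inner_smul_right, h1 k hk]
    ring
  have hpos : 0 ≤ ⟪R.halfSq • x - y, R.halfSq • x - y⟫ := real_inner_self_nonneg
  simp only [inner_sub_left, inner_sub_right, inner_smul_left, inner_smul_right,
    real_inner_comm x y, conj_trivial, hyy] at hpos
  rw [← hxy]
  have : 0 ≤ R.halfSq * (R.halfSq * ⟪x, x⟫ - ⟪x, y⟫) := by linarith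
  linarith [nonneg_of_mul_nonneg_right this hh]

lemma eps_mem_span (k : ℕ) : R.eps k ∈ Submodule.span ℝ (Set.range R.simple) := by
  have h : ∀ i, R.node i ∈ Submodule.span ℝ (Set.range R.simple) := fun i ↦ by
    unfold node
    split_ifs
    · exact Submodule.subset_span ⟨_, rfl⟩
    · exact Submodule.zero_mem _
  exact Submodule.add_mem _ (Submodule.sum_mem _ fun i _ ↦ h i)
    (Submodule.smul_mem _ _ (Submodule.sub_mem _ (h _) (h _)))

lemma epsSum_mem_span : R.epsSum ∈ Submodule.span ℝ (Set.range R.simple) :=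
  Submodule.sum_mem _ fun k _ ↦ R.eps_mem_span k

lemma sum_simple_eq (c : Fin (m + 2) → ℕ) :
    ∑ i, (c i : ℝ) • R.simple i = ∑ i, (c i : ℝ) • R.node i := by
  simp only [node_val]

lemma IsTypeD.exists_int_inner_eps {R : RootSystemData (m + 2) E} (hD : R.IsTypeD)
    (hm : 2 ≤ m) (c : Fin (m + 2) → ℕ) {k : ℕ} (hk : k ≤ m + 1) :
    ∃ z : ℤ, ⟪∑ i, (c i : ℝ) • R.simple i, R.eps k⟫ = R.halfSq * z := by
  refine ⟨∑ i : Fin (m + 2), (c i : ℤ) *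
      if (i : ℕ) = m + 1 then if k = m ∨ k = m + 1 then 1 else 0
      else if k = i then 1 else if k = i + 1 then -1 else 0, ?_⟩
  rw [sum_simple_eq, sum_inner]
  push_cast
  rw [Finset.mul_sum]
  refine Finset.sum_congr rfl fun i _ ↦ ?_
  rw [inner_smul_left, real_inner_comm, hD.inner_eps_node hm (by omega) hk]
  simp only [conj_trivial]
  ring

lemma IsTypeD.inner_eps_zero {R : RootSystemData (m + 2) E} (hD : R.IsTypeD)
    (hm : 2 ≤ m) (c : Fin (m + 2) → ℕ) :
    ⟪∑ i, (c i : ℝ) • R.simple i, R.eps 0⟫ = R.halfSq * c 0 := by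
  rw [sum_simple_eq, sum_inner, Finset.sum_eq_single 0]
  · rw [inner_smul_left, real_inner_comm, hD.inner_eps_node hm (by simp) (by omega)]
    simp [mul_comm]
  · intro i _ hi
    have : (i : ℕ) ≠ 0 := fun h ↦ hi (Fin.ext h)
    rw [inner_smul_left, real_inner_comm, hD.inner_eps_node hm (by omega) (by omega)]
    split_ifs <;> first | omega | (simp; done) | grind
  · simp

lemma IsTypeD.inner_epsSum {R : RootSystemData (m + 2) E} (hD : R.IsTypeD)
    (hm : 2 ≤ m) (c : Fin (m + 2) → ℕ) :
    ⟪∑ i, (c i : ℝ) • R.simple i, R.epsSum⟫ = R.halfSq * (2 * c (Fin.last (m + 1))) := by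
  rw [sum_simple_eq, sum_inner, Finset.sum_eq_single (Fin.last (m + 1))]
  · rw [inner_smul_left, real_inner_comm, hD.inner_epsSum_node hm (by simp)]
    simp
    ring
  · intro i _ hi
    have : (i : ℕ) ≠ m + 1 := fun h ↦ hi (Fin.ext h)
    rw [inner_smul_left, real_inner_comm, hD.inner_epsSum_node hm (by omega), if_neg this]
    simp
  · simp

/-- Vectors with half-integral coordinates and minimal length are minimal in the dominant
order. -/
lemma IsTypeD.eq_of_wle_of_half_int {R : RootSystemData (m + 2) E} (hD : R.IsTypeD)
    (hm : 2 ≤ m) {lam lam' : E}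
    (hlam : ∀ k ≤ m + 1, ∃ z : ℤ, ⟪lam, R.eps k⟫ = R.halfSq * (z + 1 / 2))
    (hnorm : ⟪lam, lam⟫ = R.halfSq * ((m + 2) / 4))
    (hdom : R.IsDominant lam') (hle : R.wle lam' lam) : lam' = lam := by
  have hh := R.halfSq_pos
  refine R.eq_of_wle_of_inner_self_le hdom hle ?_
  obtain ⟨c, hc⟩ := hle
  have h1 : ∀ k ∈ Finset.range (m + 2), R.halfSq ^ 2 * (1 / 4) ≤ ⟪lam', R.eps k⟫ ^ 2 := by
    intro k hk
    have hk' : k ≤ m + 1 := Nat.lt_succ_iff.1 (Finset.mem_range.1 hk)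
    obtain ⟨z, hz⟩ := hlam k hk'
    obtain ⟨w, hw⟩ := hD.exists_int_inner_eps hm c hk'
    rw [← hc, inner_sub_left, hz] at hw
    have h2 : ⟪lam', R.eps k⟫ = R.halfSq * ((z - w : ℤ) + 1 / 2) := by
      push_cast
      linarith
    rw [h2, mul_pow]
    refine mul_le_mul_of_nonneg_left ?_ (sq_nonneg _)
    have h3 : 0 ≤ (z - w) * (z - w + 1) := by
      rcases le_or_gt 0 (z - w) with h | h
      · positivity
      · exact mul_nonneg_of_nonpos_of_nonpos (by omega) (by omega)
    have h4 : (0 : ℝ) ≤ (z - w : ℤ) * ((z - w : ℤ) + 1) := by exact_mod_cast h3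
    nlinarith
  have h2 := (Finset.sum_le_sum h1).trans (hD.sum_inner_eps_sq_le hm lam')
  simp only [Finset.sum_const, Finset.card_range, nsmul_eq_mul, Nat.cast_add,
    Nat.cast_ofNat] at h2
  rw [hnorm]
  refine le_of_mul_le_mul_left ?_ hh
  linarith

lemma IsTypeD.eq_of_wle_eps_zero {R : RootSystemData (m + 2) E} (hD : R.IsTypeD)
    (hm : 2 ≤ m) {lam' : E}
    (hdom : R.IsDominant lam') (hle : R.wle lam' (R.eps 0)) : lam' = R.eps 0 := by
  have hh := R.halfSq_pos
  refine R.eq_of_wle_of_inner_self_le hdom hle ?_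
  obtain ⟨c, hc⟩ := hle
  have h1 : ∀ k ∈ Finset.range (m + 2),
      R.halfSq * ⟪lam', R.eps k⟫ ≤ ⟪lam', R.eps k⟫ ^ 2 ∧
      R.halfSq * -⟪lam', R.eps k⟫ ≤ ⟪lam', R.eps k⟫ ^ 2 := by
    intro k hk
    have hk' : k ≤ m + 1 := Nat.lt_succ_iff.1 (Finset.mem_range.1 hk)
    obtain ⟨w, hw⟩ := hD.exists_int_inner_eps hm c hk'
    have h2 : ∃ z : ℤ, ⟪lam', R.eps k⟫ = R.halfSq * z := by
      rw [← hc, inner_sub_left, hD.inner_eps_eps hm (by omega) hk'] at hw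
      refine ⟨(if 0 = k then 1 else 0) - w, ?_⟩
      push_cast
      linarith
    obtain ⟨z, hz⟩ := h2
    have h3 : (z : ℝ) ≤ z ^ 2 := by exact_mod_cast Int.le_self_sq z
    have h4 : -(z : ℝ) ≤ z ^ 2 := by
      have := Int.le_self_sq (-z)
      rw [neg_sq] at this
      exact_mod_cast this
    rw [hz]
    have h5 := sq_nonneg R.halfSq
    constructor <;> nlinarith
  have hsum := hD.sum_inner_eps_sq_le hm lam'
  have h2 := (Finset.sum_le_sum fun k hk ↦ (h1 k hk).1).trans hsum
  have h3 := (Finset.sum_le_sum fun k hk ↦ (h1 k hk).2).trans hsum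
  simp only [← Finset.mul_sum, Finset.sum_neg_distrib, ← inner_sum] at h2 h3
  change R.halfSq * ⟪lam', R.epsSum⟫ ≤ _ at h2
  change R.halfSq * -⟪lam', R.epsSum⟫ ≤ _ at h3
  have h4 := hD.inner_epsSum hm c
  rw [← hc, inner_sub_left, real_inner_comm, hD.inner_epsSum_eps hm (by omega)] at h4
  have h5 := le_of_mul_le_mul_left h2 hh
  have h6 := le_of_mul_le_mul_left h3 hh
  rw [hD.inner_eps_eps hm (by omega) (by omega)]
  simp only [if_true, mul_one]
  rcases Nat.eq_zero_or_pos (c (Fin.last (m + 1))) with h | h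
  · rw [h] at h4
    push_cast at h4
    linarith
  · have : (1 : ℝ) ≤ c (Fin.last (m + 1)) := by exact_mod_cast h
    nlinarith

lemma sum_range_eps {j : ℕ} (hj : j ≤ m + 1) :
    ∑ k ∈ Finset.range j, R.eps k =
      ∑ i ∈ Finset.range j, ((i : ℝ) + 1) • R.node i + (j : ℝ) • R.eps j := by
  induction j with
  | zero => simp
  | succ j ih =>
    rw [Finset.sum_range_succ, Finset.sum_range_succ, ih (by omega),
      R.eps_eq_node_add (by omega)]
    push_cast
    module

lemma epsSum_eq : R.epsSum = ∑ i ∈ Finset.range m, ((i : ℝ) + 1) • R.node i +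
    (m / 2 : ℝ) • R.node m + (m / 2 + 1 : ℝ) • R.node (m + 1) := by
  rw [epsSum, Finset.sum_range_succ, R.sum_range_eps le_rfl, Finset.sum_range_succ, eps_last]
  push_cast
  module

lemma two_smul_eps_zero : (2 : ℝ) • R.eps 0 =
    ∑ i ∈ Finset.range m, (2 : ℝ) • R.node i + R.node m + R.node (m + 1) := by
  rw [eps, ← Finset.range_eq_Ico, Finset.sum_range_succ, ← Finset.smul_sum]
  module

lemma wle_of_eq {x : E} {p : ℕ → ℕ} {q r : ℕ}
    (hx : x = ∑ i ∈ Finset.range m, ((p i : ℝ) + 1) • R.node i + ((q : ℝ) + 1) • R.node m +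
      ((r : ℝ) + 1) • R.node (m + 1)) :
    R.wle (0 + ∑ i, R.simple i) x := by
  refine ⟨fun i ↦ if (i : ℕ) = m then q else if (i : ℕ) = m + 1 then r else p i, ?_⟩
  rw [sum_simple_eq]
  simp only [← node_val]
  rw [← Finset.sum_range fun i ↦ R.node i,
    ← Finset.sum_range fun i ↦
      ((if i = m then q else if i = m + 1 then r else p i : ℕ) : ℝ) • R.node i]
  simp only [Finset.sum_range_succ, hx]
  have h1 : ∑ i ∈ Finset.range m,
      ((if i = m then q else if i = m + 1 then r else p i : ℕ) : ℝ) • R.node i =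
      ∑ i ∈ Finset.range m, (p i : ℝ) • R.node i := by
    refine Finset.sum_congr rfl fun i hi ↦ ?_
    have := Finset.mem_range.1 hi
    rw [if_neg (by omega), if_neg (by omega)]
  rw [h1]
  simp only [add_smul, Finset.sum_add_distrib, one_smul, if_true, Nat.succ_ne_self, if_false]
  abel

lemma lowTriple_zero_of_minimal (h0 : R.IsDominant 0) {lam mu : E} (hlam : R.IsDominant lam)
    (hmu : R.IsDominant mu)
    (hlmin : ∀ x, R.IsDominant x → R.wle x lam → x = lam)
    (hmmin : ∀ x, R.IsDominant x → R.wle x mu → x = mu)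
    (hle : R.wle (0 + ∑ i, R.simple i) (lam + mu)) : R.LowTriple lam mu 0 :=
  ⟨hlam, hmu, h0, fun x y hx hy hxl hym _ ↦ ⟨hlmin x hx hxl, hmmin y hy hym⟩, hle⟩

/-- If the coordinates of `lam + mu` have odd sum and the first one is `1`, then `(lam, mu)`
belongs to no low triple. -/
lemma IsTypeD.not_lowTriple {R : RootSystemData (m + 2) E} (hD : R.IsTypeD) (hm : 2 ≤ m)
    {lam mu nu : E} (h0 : ⟪lam + mu, R.eps 0⟫ = R.halfSq) {z : ℕ}
    (hz : ⟪lam + mu, R.epsSum⟫ = R.halfSq * (2 * z + 1)) : ¬ R.LowTriple lam mu nu := by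
  rintro ⟨-, -, hnu, -, c, hc⟩
  have hh := R.halfSq_pos
  have hdom : ∀ j ≤ m + 1, 0 ≤ ⟪nu, R.node j⟫ := by
    intro j hj
    have h1 := cpair_mul_inner_self (R.simple_ne_zero ⟨j, by omega⟩) nu
    have h2 : 0 ≤ ⟪R.simple ⟨j, by omega⟩, R.simple ⟨j, by omega⟩⟫ := real_inner_self_nonneg
    have h3 := mul_nonneg (hnu.2 ⟨j, by omega⟩) h2
    rw [node, dif_pos (by omega)]
    linarith
  have hnu' : nu = lam + mu - ∑ i, ((c i + 1 : ℕ) : ℝ) • R.simple i := by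
    push_cast
    simp only [add_smul, one_smul, Finset.sum_add_distrib, ← hc]
    abel
  have hfirst : ⟪nu, R.eps 0⟫ ≤ 0 := by
    rw [hnu', inner_sub_left, h0, hD.inner_eps_zero hm]
    push_cast
    have : (0 : ℝ) ≤ c 0 := Nat.cast_nonneg _
    nlinarith
  have hstep : ∀ k ≤ m, ⟪nu, R.eps (k + 1)⟫ ≤ ⟪nu, R.eps k⟫ := by
    intro k hk
    have := hdom k (by omega)
    rw [R.node_eq hk, inner_sub_right] at this
    linarith
  have hlast : 0 ≤ ⟪nu, R.eps m⟫ + ⟪nu, R.eps (m + 1)⟫ := by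
    rw [← inner_add_right, ← node_last]
    exact hdom _ le_rfl
  have hup : ∀ k ≤ m + 1, ⟪nu, R.eps k⟫ ≤ 0 := by
    intro k
    induction k with
    | zero => exact fun _ ↦ hfirst
    | succ k ih => exact fun hk ↦ (hstep k (by omega)).trans (ih (by omega))
  have hm0 := hup m (by omega)
  have hm1 := hup (m + 1) le_rfl
  have hlow : ∀ k ≤ m + 1, 0 ≤ ⟪nu, R.eps k⟫ := by
    intro k hk
    induction hk using Nat.decreasingInduction with
    | self => linarith
    | of_succ k hk ih => exact ih.trans (hstep k (by omega))
  have hsum : ⟪nu, R.epsSum⟫ = 0 := by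
    rw [epsSum, inner_sum]
    refine Finset.sum_eq_zero fun k hk ↦ ?_
    have hk' : k ≤ m + 1 := Nat.lt_succ_iff.1 (Finset.mem_range.1 hk)
    exact le_antisymm (hup k hk') (hlow k hk')
  rw [hnu', inner_sub_left, hz, hD.inner_epsSum hm, ← mul_sub] at hsum
  have h2 := (mul_eq_zero.1 hsum).resolve_left hh.ne'
  have h3 : (2 * z + 1 : ℕ) = 2 * (c (Fin.last (m + 1)) + 1) := by
    have : (2 * z + 1 : ℝ) = 2 * ((c (Fin.last (m + 1)) + 1 : ℕ) : ℝ) := by linarith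
    exact_mod_cast this
  omega

lemma IsTypeD.eps_add_eps_mem {R : RootSystemData (m + 2) E} (hD : R.IsTypeD) (hm : 2 ≤ m)
    {k : ℕ} (hk : k ≤ m) : R.eps k + R.eps (k + 1) ∈ R.roots := by
  have hh := R.halfSq_pos
  induction hk using Nat.decreasingInduction with
  | self =>
    rw [← node_last]
    exact R.node_mem le_rfl
  | of_succ k hk ih =>
    have hrefl : ∀ j ≤ m, ∀ x : E, ⟪x, R.node j⟫ = R.halfSq * -1 →
        wrefl (R.node j) x = x + R.node j := by
      intro j hj x hx
      rw [wrefl, cpair, hx, hD.inner_node (by omega) (by omega), if_pos rfl]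
      have : 2 * (R.halfSq * -1) / (R.halfSq * 2) = -1 := by field_simp
      rw [this]
      module
    have h1 := R.reflect_mem _ (R.node_mem (i := k) (by omega)) _ ih
    rw [hrefl k hk.le _ (by
      rw [inner_add_left, hD.inner_eps_node hm (by omega) (by omega),
        hD.inner_eps_node hm (by omega) (by omega), ← mul_add]
      congr 1
      split_ifs <;> first | omega | norm_num), R.node_eq hk.le] at h1
    have h2 := R.reflect_mem _ (R.node_mem (i := k + 1) (by omega)) _ h1
    have h3 : R.eps (k + 1) + R.eps (k + 1 + 1) + (R.eps k - R.eps (k + 1)) =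
        R.eps k + R.eps (k + 1 + 1) := by abel
    rw [h3, hrefl (k + 1) hk _ (by
      rw [inner_add_left, hD.inner_eps_node hm (by omega) (by omega),
        hD.inner_eps_node hm (by omega) (by omega), ← mul_add]
      congr 1
      split_ifs <;> first | omega | norm_num), R.node_eq hk] at h2
    convert h2 using 1
    abel

lemma IsTypeD.inWeylOrbit_neg_half_epsSum {R : RootSystemData (m + 2) E} (hD : R.IsTypeD)
    (hm : 2 ≤ m) {j : ℕ} (hj : 2 * j ≤ m + 2) :
    R.InWeylOrbit (-((2⁻¹ : ℝ) • R.epsSum))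
      (-((2⁻¹ : ℝ) • R.epsSum) + ∑ k ∈ Finset.range (2 * j), R.eps k) := by
  have hh := R.halfSq_pos
  induction j with
  | zero => exact ⟨[], by simp, by simp⟩
  | succ j ih =>
    obtain ⟨l, hl, hl'⟩ := ih (by omega)
    have hmem := hD.eps_add_eps_mem hm (k := 2 * j) (by omega)
    refine ⟨(R.eps (2 * j) + R.eps (2 * j + 1)) :: l, ?_, ?_⟩
    · intro α hα
      rcases List.mem_cons.1 hα with rfl | hα
      · exact hmem
      · exact hl α hα
    · have hz : ∀ t, 2 * j ≤ t → t ≤ m + 1 →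
          ⟪∑ k ∈ Finset.range (2 * j), R.eps k, R.eps t⟫ = 0 := by
        intro t ht ht'
        rw [sum_inner]
        refine Finset.sum_eq_zero fun k hk ↦ ?_
        have := Finset.mem_range.1 hk
        rw [hD.inner_eps_eps hm (by omega) ht', if_neg (by omega), mul_zero]
      have hself : ⟪R.eps (2 * j) + R.eps (2 * j + 1), R.eps (2 * j) + R.eps (2 * j + 1)⟫ =
          2 * R.halfSq := by
        simp only [inner_add_left, inner_add_right]
        rw [hD.inner_eps_eps hm (by omega) (by omega), hD.inner_eps_eps hm (by omega) (by omega),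
          hD.inner_eps_eps hm (by omega) (by omega), hD.inner_eps_eps hm (by omega) (by omega)]
        simp
        ring
      have hpair : cpair (-((2⁻¹ : ℝ) • R.epsSum) + ∑ k ∈ Finset.range (2 * j), R.eps k)
          (R.eps (2 * j) + R.eps (2 * j + 1)) = -1 := by
        rw [cpair, hself, inner_add_right, inner_add_left, inner_add_left,
          hz _ le_rfl (by omega), hz _ (by omega) (by omega), inner_neg_left, inner_neg_left,
          inner_smul_left, inner_smul_left, hD.inner_epsSum_eps hm (by omega),
          hD.inner_epsSum_eps hm (by omega)]
        simp only [conj_trivial]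
        field_simp
        ring
      rw [List.foldr_cons, ← hl', wrefl, hpair, show 2 * (j + 1) = 2 * j + 1 + 1 by ring,
        Finset.sum_range_succ, Finset.sum_range_succ]
      module

lemma IsTypeD.eq_of_cpair_eq {R : RootSystemData (m + 2) E} (hD : R.IsTypeD)
    {x y : E} (hx : ∃ c : Fin (m + 2) → ℝ, x = ∑ j, c j • R.simple j)
    (hy : y ∈ Submodule.span ℝ (Set.range R.simple)) {i : Fin (m + 2)}
    (h : ∀ j, cpair x (R.simple j) = if i = j then 1 else 0)
    (hxy : ∀ j ≤ m + 1, ⟪y, R.node j⟫ = R.halfSq * if (i : ℕ) = j then 1 else 0) :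
    x = y := by
  obtain ⟨c, hc⟩ := hx
  refine R.eq_of_inner_simple
    ((Submodule.mem_span_range_iff_exists_fun ℝ).2 ⟨c, hc.symm⟩) hy fun j ↦ ?_
  have h1 := cpair_mul_inner_self (R.simple_ne_zero j) x
  rw [h, hD.inner_simple_self] at h1
  rw [← R.node_val j, hxy j (by omega), R.node_val]
  simp only [Fin.ext_iff] at h1
  linarith

end TypeD

end RootSystemData

/-- In type D_ℓ: for ℓ even, `(ω_ℓ,ω_ℓ,0)`, `(ω_{ℓ-1},ω_{ℓ-1},0)` and
`(ω₁,ω₁,0)` are low triples while `(ω_{ℓ-1},ω_ℓ,ν)` never is, and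
`-w₀ω_ℓ = ω_ℓ`; for ℓ odd, `(ω_{ℓ-1},ω_ℓ,0)` and `(ω₁,ω₁,0)` are low triples
while `(ω_ℓ,ω_ℓ,ν)` never is, and `-w₀ω_ℓ = ω_{ℓ-1}`. -/
theorem statement8 (R : RootSystemData ℓ E) (hℓ : 4 ≤ ℓ) (hD : R.IsTypeD)
    (ω : Fin ℓ → E)
    (hω : ∀ i j, cpair (ω i) (R.simple j) = if i = j then 1 else 0)
    (hspan : ∀ i, ∃ c : Fin ℓ → ℝ, ω i = ∑ j, c j • R.simple j) :
    (Even ℓ →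
      R.LowTriple (ω ⟨ℓ - 1, by omega⟩) (ω ⟨ℓ - 1, by omega⟩) 0 ∧
      R.LowTriple (ω ⟨ℓ - 2, by omega⟩) (ω ⟨ℓ - 2, by omega⟩) 0 ∧
      R.LowTriple (ω ⟨0, by omega⟩) (ω ⟨0, by omega⟩) 0 ∧
      (∀ ν : E, ¬ R.LowTriple (ω ⟨ℓ - 2, by omega⟩) (ω ⟨ℓ - 1, by omega⟩) ν) ∧
      R.IsDualOf (ω ⟨ℓ - 1, by omega⟩) (ω ⟨ℓ - 1, by omega⟩)) ∧
    (¬ Even ℓ →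
      R.LowTriple (ω ⟨ℓ - 2, by omega⟩) (ω ⟨ℓ - 1, by omega⟩) 0 ∧
      R.LowTriple (ω ⟨0, by omega⟩) (ω ⟨0, by omega⟩) 0 ∧
      (∀ ν : E, ¬ R.LowTriple (ω ⟨ℓ - 1, by omega⟩) (ω ⟨ℓ - 1, by omega⟩) ν) ∧
      R.IsDualOf (ω ⟨ℓ - 2, by omega⟩) (ω ⟨ℓ - 1, by omega⟩)) := by
  obtain ⟨m, rfl⟩ : ∃ m, ℓ = m + 2 := ⟨ℓ - 2, by omega⟩
  have hm : 2 ≤ m := by omega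
  have h0 : ω ⟨0, by omega⟩ = R.eps 0 :=
    hD.eq_of_cpair_eq (hspan _) (R.eps_mem_span 0) (hω _) fun j hj ↦ by
      rw [hD.inner_eps_node hm hj (by omega)]
      congr 1
      split_ifs <;> first | omega | rfl | grind
  have h1 : ω ⟨m + 2 - 1, by omega⟩ = (2⁻¹ : ℝ) • R.epsSum :=
    hD.eq_of_cpair_eq (hspan _) (Submodule.smul_mem _ _ R.epsSum_mem_span) (hω _)
      fun j hj ↦ by
        rw [inner_smul_left, hD.inner_epsSum_node hm hj, mul_left_comm]
        congr 1
        simp only [conj_trivial]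
        split_ifs <;> first | omega | norm_num
  have h2 : ω ⟨m + 2 - 2, by omega⟩ = (2⁻¹ : ℝ) • R.epsSum - R.eps (m + 1) :=
    hD.eq_of_cpair_eq (hspan _)
      (Submodule.sub_mem _ (Submodule.smul_mem _ _ R.epsSum_mem_span) (R.eps_mem_span _))
      (hω _) fun j hj ↦ by
        rw [inner_sub_left, inner_smul_left, hD.inner_epsSum_node hm hj, mul_left_comm,
          hD.inner_eps_node hm hj le_rfl, ← mul_sub]
        congr 1
        simp only [conj_trivial]
        split_ifs <;> first | omega | (norm_num; done) | grind
  have hdom : ∀ i, R.IsDominant (ω i) := fun i ↦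
    R.isDominant_of_simple hD.inner_simple_self (n := fun j ↦ if i = j then 1 else 0)
      fun j ↦ by rw [hω]; push_cast; rfl
  have hd : R.IsDominant 0 :=
    R.isDominant_of_simple hD.inner_simple_self (n := fun _ ↦ 0) fun j ↦ by simp [cpair]
  have hd0 := hdom ⟨0, by omega⟩
  have hd1 := hdom ⟨m + 2 - 1, by omega⟩
  have hd2 := hdom ⟨m + 2 - 2, by omega⟩
  rw [h0] at hd0
  rw [h1] at hd1
  rw [h2] at hd2
  rw [h0, h1, h2]
  have hmin1 : ∀ x, R.IsDominant x → R.wle x ((2⁻¹ : ℝ) • R.epsSum) →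
      x = (2⁻¹ : ℝ) • R.epsSum := fun x ↦
    hD.eq_of_wle_of_half_int hm
      (fun k hk ↦ ⟨0, by
        rw [inner_smul_left, hD.inner_epsSum_eps hm hk]
        simp [mul_comm]⟩)
      (by
        rw [inner_smul_left, inner_smul_right, hD.inner_epsSum_self hm]
        simp only [conj_trivial]
        ring)
  have hmin2 : ∀ x, R.IsDominant x → R.wle x ((2⁻¹ : ℝ) • R.epsSum - R.eps (m + 1)) →
      x = (2⁻¹ : ℝ) • R.epsSum - R.eps (m + 1) := fun x ↦
    hD.eq_of_wle_of_half_int hm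
      (fun k hk ↦ ⟨if m + 1 = k then -1 else 0, by
        rw [inner_sub_left, inner_smul_left, hD.inner_epsSum_eps hm hk,
          hD.inner_eps_eps hm le_rfl hk]
        simp only [conj_trivial]
        push_cast
        split_ifs <;> ring⟩)
      (by
        simp only [inner_sub_left, inner_sub_right, inner_smul_left, inner_smul_right,
          real_inner_comm R.epsSum (R.eps (m + 1)), hD.inner_epsSum_self hm,
          hD.inner_epsSum_eps hm (le_refl (m + 1)), conj_trivial,
          hD.inner_eps_eps hm (le_refl (m + 1)) (le_refl (m + 1)), if_true]
        ring)
  have hlow0 : R.LowTriple (R.eps 0) (R.eps 0) 0 := by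
    refine R.lowTriple_zero_of_minimal hd hd0 hd0 (fun x ↦ hD.eq_of_wle_eps_zero hm)
      (fun x ↦ hD.eq_of_wle_eps_zero hm)
      (R.wle_of_eq (p := fun _ ↦ 1) (q := 0) (r := 0) ?_)
    rw [← two_smul ℝ, R.two_smul_eps_zero]
    norm_num
  have hsum0 : ⟪R.epsSum, R.eps 0⟫ = R.halfSq := hD.inner_epsSum_eps hm (by omega)
  have hlast0 : ⟪R.eps (m + 1), R.eps 0⟫ = 0 := by
    rw [hD.inner_eps_eps hm le_rfl (by omega), if_neg (by omega), mul_zero]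
  have hlastsum : ⟪R.eps (m + 1), R.epsSum⟫ = R.halfSq := by
    rw [real_inner_comm, hD.inner_epsSum_eps hm le_rfl]
  constructor
  · intro he
    obtain ⟨q, rfl⟩ : ∃ q, m = 2 * (q + 1) := by
      obtain ⟨r, hr⟩ := he
      exact ⟨r - 2, by omega⟩
    refine ⟨?_, ?_, hlow0, fun ν ↦ ?_, hd1, ?_⟩
    · refine R.lowTriple_zero_of_minimal hd hd1 hd1 hmin1 hmin1
        (R.wle_of_eq (p := id) (q := q) (r := q + 1) ?_)
      rw [← two_smul ℝ, smul_inv_smul₀ two_ne_zero, R.epsSum_eq]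
      push_cast
      simp only [id]
      module
    · refine R.lowTriple_zero_of_minimal hd hd2 hd2 hmin2 hmin2
        (R.wle_of_eq (p := id) (q := q + 1) (r := q) ?_)
      rw [← two_smul ℝ, smul_sub, smul_inv_smul₀ two_ne_zero, R.epsSum_eq, R.eps_last]
      push_cast
      simp only [id]
      module
    · refine hD.not_lowTriple hm (z := q + 1) ?_ ?_
      · rw [inner_add_left, inner_sub_left, inner_smul_left, hsum0, hlast0]
        simp only [conj_trivial]
        ring
      · rw [inner_add_left, inner_sub_left, inner_smul_left, hlastsum,
          hD.inner_epsSum_self hm]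
        simp only [conj_trivial]
        push_cast
        ring
    · have := hD.inWeylOrbit_neg_half_epsSum hm (j := q + 2) (by omega)
      convert this using 1
      rw [show 2 * (q + 2) = 2 * (q + 1) + 2 by ring]
      change _ = _ + R.epsSum
      module
  · intro ho
    obtain ⟨q, rfl⟩ : ∃ q, m = 2 * q + 1 := by
      obtain ⟨r, hr⟩ := Nat.not_even_iff_odd.1 ho
      exact ⟨r - 1, by omega⟩
    refine ⟨?_, hlow0, fun ν ↦ ?_, hd2, ?_⟩
    · refine R.lowTriple_zero_of_minimal hd hd2 hd1 hmin2 hmin1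
        (R.wle_of_eq (p := id) (q := q) (r := q) ?_)
      have : (2⁻¹ : ℝ) • R.epsSum - R.eps (2 * q + 1 + 1) + (2⁻¹ : ℝ) • R.epsSum =
        R.epsSum - R.eps (2 * q + 1 + 1) := by module
      rw [this, R.epsSum_eq, R.eps_last]
      push_cast
      simp only [id]
      module
    · refine hD.not_lowTriple hm (z := q + 1) ?_ ?_
      · rw [inner_add_left, inner_smul_left, hsum0]
        simp only [conj_trivial]
        ring
      · rw [inner_add_left, inner_smul_left, hD.inner_epsSum_self hm]
        simp only [conj_trivial]
        push_cast
        ring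
    · have := hD.inWeylOrbit_neg_half_epsSum hm (j := q + 1) (by omega)
      convert this using 1
      have h3 : R.epsSum = ∑ k ∈ Finset.range (2 * (q + 1)), R.eps k +
          R.eps (2 * q + 1 + 1) := Finset.sum_range_succ _ _
      rw [← sub_eq_iff_eq_add.2 h3]
      module
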